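/- Let α, β ∈ (0,1] and let E ⊆ ℝ² be an F_{αβ}-set. Then the Hausdorff dimension of E satisfies dim_H(E) ≥ max{α + β/2, 2α + β − 1}. -/

import Mathlib

/-!
STATEMENT 0: Let `α, β ∈ (0,1]` and let `E ⊆ ℝ²` be an `F_{αβ}`-set, i.e. there is a
subset `L` of the unit circle with `dim_H(L) ≥ β` such that for each direction `e ∈ L`
there is a line segment `ℓ_e` in the direction of `e` with `dim_H(E ∩ ℓ_e) ≥ α`.
Then `dim_H(E) ≥ max {α + β/2, 2α + β − 1}`.
-/

open Metric Set MeasureTheory ENNReal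

noncomputable section

abbrev E2 := EuclideanSpace ℝ (Fin 2)

/-- `ℓ` is a line segment in the direction of `e`. -/
def IsSegment (ℓ : Set E2) (e : E2) : Prop :=
  ∃ (p : E2) (a b : ℝ), a ≤ b ∧ ℓ = (fun t : ℝ => p + t • e) '' Set.Icc a b

/-- Hausdorff pre-measure at scale `1/n`. -/
def cont (a : ℝ) (n : ℕ) : OuterMeasure E2 :=
  OuterMeasure.mkMetric'.pre (fun s => ediam s ^ a) ((n : ℝ≥0∞)⁻¹)

lemma cont_mono {a : ℝ} {n m : ℕ} (h : n ≤ m) (A : Set E2) : cont a n A ≤ cont a m A :=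
  OuterMeasure.mkMetric'.mono_pre_nat (fun s : Set E2 => ediam s ^ a) h A

lemma cont_le {a : ℝ} (ha : 0 ≤ a) {n : ℕ} {A : Set E2} {d : ℝ} (hd : 0 ≤ d)
    (hdn : d * n ≤ 1) (h : ∀ x ∈ A, ∀ y ∈ A, ‖x - y‖ ≤ d) :
    cont a n A ≤ ENNReal.ofReal (d ^ a) := by
  have h1 : ediam A ≤ ENNReal.ofReal d := by
    refine ediam_le fun x hx y hy => ?_
    rw [edist_dist, dist_eq_norm]
    exact ENNReal.ofReal_le_ofReal (h x hx y hy)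
  have h2 : ENNReal.ofReal d ≤ (n : ℝ≥0∞)⁻¹ := by
    rw [ENNReal.le_inv_iff_mul_le, ← ENNReal.ofReal_natCast, ← ENNReal.ofReal_mul hd]
    exact ENNReal.ofReal_le_one.2 hdn
  refine (OuterMeasure.mkMetric'.pre_le (h1.trans h2)).trans ?_
  rw [← ENNReal.ofReal_rpow_of_nonneg hd ha]
  exact ENNReal.rpow_le_rpow h1 ha

lemma exists_cont {a : ℝ} (ha : 0 ≤ a) {A : Set E2} (h : ENNReal.ofReal a < dimH A) :
    ∃ n : ℕ, 1 < cont a n A := by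
  have h1 : Measure.hausdorffMeasure a A = ∞ := by
    have := hausdorffMeasure_of_lt_dimH (d := a.toNNReal) (s := A) h
    rwa [Real.coe_toNNReal a ha] at this
  have h2 : Measure.hausdorffMeasure a A = ⨆ n : ℕ, cont a n A := by
    unfold Measure.hausdorffMeasure cont
    rw [← OuterMeasure.coe_mkMetric, OuterMeasure.mkMetric, OuterMeasure.mkMetric'.eq_iSup_nat,
      OuterMeasure.iSup_apply]
  rw [h1] at h2
  have h3 : (1 : ℝ≥0∞) < ⨆ n : ℕ, cont a n A := by rw [← h2]; exact ENNReal.one_lt_top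
  exact lt_iSup_iff.1 h3

/-- index of the grid square containing `x` -/
def idx (δ : ℝ) (x : E2) : ℤ × ℤ := (⌊x 0 / δ⌋, ⌊x 1 / δ⌋)

lemma norm_le_coords (x : E2) : ‖x‖ ≤ |x 0| + |x 1| := by
  rw [EuclideanSpace.norm_eq, Fin.sum_univ_two]
  apply Real.sqrt_le_iff.2 ⟨by positivity, ?_⟩
  simp only [Real.norm_eq_abs]
  nlinarith [abs_nonneg (x 0), abs_nonneg (x 1)]

lemma coord_le_norm (x : E2) (i : Fin 2) : |x i| ≤ ‖x‖ := by
  simpa using PiLp.norm_apply_le x i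

lemma floor_eq_close {δ u v : ℝ} (hδ : 0 < δ) (h : ⌊u / δ⌋ = ⌊v / δ⌋) : |u - v| ≤ δ := by
  have := Int.abs_sub_lt_one_of_floor_eq_floor h
  rw [← sub_div, abs_div, abs_of_pos hδ, div_lt_one hδ] at this
  exact this.le

lemma idx_close {δ : ℝ} (hδ : 0 < δ) {x y : E2} (h : idx δ x = idx δ y) : ‖x - y‖ ≤ 2 * δ := by
  have h0 := floor_eq_close hδ (congrArg Prod.fst h)
  have h1 := floor_eq_close hδ (congrArg Prod.snd h)
  have := norm_le_coords (x - y)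
  simp only [PiLp.sub_apply] at this
  linarith

lemma floor_near {δ u v : ℝ} (hδ : 0 < δ) (h : |u - v| ≤ δ) :
    ⌊u / δ⌋ - ⌊v / δ⌋ ∈ Finset.Icc (-1 : ℤ) 1 := by
  have h1 : |u / δ - v / δ| ≤ 1 := by
    rw [← sub_div, abs_div, abs_of_pos hδ, div_le_one hδ]; exact h
  rw [abs_le] at h1
  rw [Finset.mem_Icc]
  constructor
  · have : ⌊v / δ⌋ ≤ ⌊u / δ + 1⌋ := Int.floor_le_floor (by linarith)
    rw [Int.floor_add_one] at this; omega
  · have : ⌊u / δ⌋ ≤ ⌊v / δ + 1⌋ := Int.floor_le_floor (by linarith)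
    rw [Int.floor_add_one] at this; omega

lemma idx_near {δ : ℝ} (hδ : 0 < δ) {x y : E2} (h : ‖x - y‖ ≤ δ) :
    idx δ x - idx δ y ∈ Finset.Icc (-1 : ℤ) 1 ×ˢ Finset.Icc (-1 : ℤ) 1 := by
  rw [Finset.mem_product]
  exact ⟨floor_near hδ ((coord_le_norm (x - y) 0).trans h),
    floor_near hδ ((coord_le_norm (x - y) 1).trans h)⟩

lemma scale_exists {s d : ℝ} (hs : 0 < s) (hd : 0 ≤ d) {ε : ℝ} (hε : 0 < ε) {k0 : ℕ}
    (hk : d ≤ (1 / 2) ^ k0) :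
    ∃ k ≥ k0, d ≤ (1 / 2 : ℝ) ^ k ∧ ((1 / 2 : ℝ) ^ k) ^ s ≤ 2 ^ s * d ^ s + ε := by
  rcases hd.eq_or_lt with rfl | hd
  · have h1 : Filter.Tendsto (fun k : ℕ => ((1 / 2 : ℝ) ^ s) ^ k) Filter.atTop (nhds 0) :=
      tendsto_pow_atTop_nhds_zero_of_lt_one (by positivity)
        (Real.rpow_lt_one (by norm_num) (by norm_num) hs)
    obtain ⟨k, hk1, hk2⟩ := ((h1.eventually (gt_mem_nhds hε)).and
      (Filter.eventually_ge_atTop k0)).exists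
    refine ⟨k, hk2, by positivity, ?_⟩
    rw [Real.zero_rpow hs.ne', mul_zero, zero_add]
    rw [← Real.rpow_natCast, ← Real.rpow_mul (by norm_num), mul_comm, Real.rpow_mul (by norm_num),
      Real.rpow_natCast] at hk1
    exact hk1.le
  · have hd1 : d ≤ 1 := hk.trans (pow_le_one₀ (by norm_num) (by norm_num))
    obtain ⟨k, hk1, hk2⟩ := exists_nat_pow_near_of_lt_one hd hd1 (y := (1/2 : ℝ)) (by norm_num)
      (by norm_num)
    refine ⟨k, ?_, hk2, ?_⟩
    · by_contra hlt
      push Not at hlt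
      have : (1 / 2 : ℝ) ^ k0 ≤ (1 / 2) ^ (k + 1) :=
        pow_le_pow_of_le_one (by norm_num) (by norm_num) hlt
      linarith
    · rw [← Real.mul_rpow (by norm_num) hd.le]
      have : (1 / 2 : ℝ) ^ k ≤ 2 * d := by rw [pow_succ] at hk1; linarith
      have := Real.rpow_le_rpow (by positivity) this hs.le
      linarith

lemma cover_lemma {s : ℝ} (hs : 0 < s) {E : Set E2} (h : dimH E < ENNReal.ofReal s) (k0 : ℕ) :
    ∃ Q : ℕ → Finset (ℤ × ℤ), (∀ k, ((Q k).card : ℝ) ≤ 9 * ((2 : ℝ) ^ k) ^ s) ∧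
      ∀ x ∈ E, ∃ k ≥ k0, idx ((1 / 2) ^ k) x ∈ Q k := by
  classical
  have h1 : Measure.hausdorffMeasure s E = 0 := by
    have := hausdorffMeasure_of_dimH_lt (d := s.toNNReal) (s := E) h
    rwa [Real.coe_toNNReal s hs.le] at this
  rw [Measure.hausdorffMeasure_apply] at h1
  have hr : (0 : ℝ≥0∞) < ENNReal.ofReal ((1 / 2) ^ k0) := by
    rw [ENNReal.ofReal_pos]; positivity
  have h2 := le_iSup₂ (f := fun (r : ℝ≥0∞) (_ : 0 < r) =>
        ⨅ (t : ℕ → Set E2) (_ : E ⊆ ⋃ n, t n) (_ : ∀ n, ediam (t n) ≤ r),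
          ∑' n, ⨆ _ : (t n).Nonempty, ediam (t n) ^ s) _ hr
  rw [h1] at h2
  have h3 : (⨅ (t : ℕ → Set E2) (_ : E ⊆ ⋃ n, t n)
      (_ : ∀ n, ediam (t n) ≤ ENNReal.ofReal ((1 / 2) ^ k0)),
          ∑' n, ⨆ _ : (t n).Nonempty, ediam (t n) ^ s) < ENNReal.ofReal (2 ^ s * 2)⁻¹ := by
    refine lt_of_le_of_lt h2 ?_
    rw [ENNReal.ofReal_pos]; positivity
  simp only [iInf_lt_iff] at h3
  obtain ⟨t, hcov, hdiam, hsum⟩ := h3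
  have hfin : ∀ n, ediam (t n) ≠ ∞ := fun n => ne_top_of_le_ne_top ENNReal.ofReal_ne_top (hdiam n)
  have hw : ∀ n, (⨆ _ : (t n).Nonempty, ediam (t n) ^ s) = ediam (t n) ^ s := by
    intro n
    rcases (t n).eq_empty_or_nonempty with h0 | h0
    · simp [h0, hs]
    · simp [h0]
  simp only [hw] at hsum
  have hex : ∀ n, ∃ k ≥ k0, (ediam (t n)).toReal ≤ (1 / 2 : ℝ) ^ k ∧
      ((1 / 2 : ℝ) ^ k) ^ s ≤ 2 ^ s * (ediam (t n)).toReal ^ s + 1 / 4 * (1 / 2) ^ n := by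
    intro n
    refine scale_exists hs ENNReal.toReal_nonneg (by positivity) ?_
    exact ENNReal.toReal_le_of_le_ofReal (by positivity) (hdiam n)
  choose K hK0 hKd hKs using hex
  have htot : ∑' n, ENNReal.ofReal (((1 / 2 : ℝ) ^ (K n)) ^ s) ≤ 1 := by
    calc ∑' n, ENNReal.ofReal (((1 / 2 : ℝ) ^ (K n)) ^ s)
        ≤ ∑' n, (ENNReal.ofReal (2 ^ s) * ediam (t n) ^ s + ENNReal.ofReal (1 / 4 * (1 / 2) ^ n)) := by
          refine ENNReal.tsum_le_tsum fun n => ?_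
          refine (ENNReal.ofReal_le_ofReal (hKs n)).trans ?_
          rw [ENNReal.ofReal_add (by positivity) (by positivity), ENNReal.ofReal_mul (by positivity),
            ← ENNReal.ofReal_rpow_of_nonneg ENNReal.toReal_nonneg hs.le,
            ENNReal.ofReal_toReal (hfin n)]
      _ = ENNReal.ofReal (2 ^ s) * ∑' n, ediam (t n) ^ s + ENNReal.ofReal (1 / 2) := by
          rw [ENNReal.tsum_add, ENNReal.tsum_mul_left, ← ENNReal.ofReal_tsum_of_nonneg,
            tsum_mul_left, tsum_geometric_two]
          · norm_num
          · intro n; positivity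
          · exact summable_geometric_two.mul_left _
      _ ≤ ENNReal.ofReal (2 ^ s) * ENNReal.ofReal (2 ^ s * 2)⁻¹ + ENNReal.ofReal (1 / 2) := by
          gcongr
      _ = 1 := by
          rw [← ENNReal.ofReal_mul (by positivity), ← ENNReal.ofReal_add (by positivity)
            (by positivity), ENNReal.ofReal_eq_one]
          have : (2:ℝ) ^ s ≠ 0 := by positivity
          field_simp
          norm_num
  have hpos : ∀ k : ℕ, ENNReal.ofReal (((1 / 2 : ℝ) ^ k) ^ s) ≠ 0 := by
    intro k; rw [ne_eq, ENNReal.ofReal_eq_zero, not_le]; positivity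
  have hF := fun k : ℕ => ENNReal.finset_card_const_le_le_of_tsum_le ENNReal.one_ne_top htot (hpos k)
  choose hf hcard using hF
  let pt : ℕ → E2 := fun n => if h : (t n).Nonempty then h.some else 0
  let nb : Finset (ℤ × ℤ) := Finset.Icc (-1 : ℤ) 1 ×ˢ Finset.Icc (-1 : ℤ) 1
  refine ⟨fun k => ((hf k).toFinset ×ˢ nb).image (fun z => z.2 + idx ((1 / 2) ^ k) (pt z.1)),
    fun k => ?_, fun x hx => ?_⟩
  · have h5 : (((hf k).toFinset ×ˢ nb).image
        (fun z => z.2 + idx ((1 / 2) ^ k) (pt z.1))).card ≤ (hf k).toFinset.card * 9 := by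
      refine Finset.card_image_le.trans ?_
      rw [Finset.card_product]
      have : nb.card = 9 := by decide
      rw [this]
    have h6 : ((hf k).toFinset.card : ℝ) ≤ ((2 : ℝ) ^ k) ^ s := by
      have := hcard k
      rw [← ENNReal.ofReal_one, ← ENNReal.ofReal_div_of_pos (by positivity),
        ← ENNReal.ofReal_natCast, ENNReal.ofReal_le_ofReal_iff (by positivity)] at this
      refine this.trans (le_of_eq ?_)
      rw [one_div, one_div, inv_pow, Real.inv_rpow (by positivity), inv_inv]
    have h7 : ((((hf k).toFinset ×ˢ nb).image
        (fun z => z.2 + idx ((1 / 2) ^ k) (pt z.1))).card : ℝ) ≤ (hf k).toFinset.card * 9 := by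
      exact_mod_cast h5
    linarith
  · obtain ⟨n, hn⟩ := mem_iUnion.1 (hcov hx)
    refine ⟨K n, hK0 n, ?_⟩
    rw [Finset.mem_image]
    have hne : (t n).Nonempty := ⟨x, hn⟩
    have hpt : pt n ∈ t n := by simp only [pt, dif_pos hne]; exact hne.some_mem
    refine ⟨(n, idx ((1 / 2) ^ (K n)) x - idx ((1 / 2) ^ (K n)) (pt n)), ?_, by simp⟩
    rw [Finset.mem_product]
    refine ⟨by simp, idx_near (by positivity) ?_⟩
    refine le_trans ?_ (hKd n)
    rw [← dist_eq_norm, ← ENNReal.ofReal_le_iff_le_toReal (hfin n), ← edist_dist]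
    exact edist_le_ediam_of_mem hn hpt

lemma pigeon (μ : OuterMeasure E2) {A : Set E2} (hA : 1 < μ A) (B : ℕ → Set E2) (k0 : ℕ)
    (hc : ∀ x ∈ A, ∃ k ≥ k0, x ∈ B k) (w : ℕ → ℝ≥0∞) (hw : ∑' k, w k ≤ 1) :
    ∃ k ≥ k0, w k ≤ μ (B k ∩ A) := by
  by_contra hcon
  push Not at hcon
  have h1 : A ⊆ ⋃ k, {x | k0 ≤ k ∧ x ∈ B k ∩ A} := by
    intro x hx
    obtain ⟨k, hk, hxk⟩ := hc x hx
    exact mem_iUnion.2 ⟨k, hk, hxk, hx⟩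
  have h2 : μ A ≤ ∑' k, w k := by
    refine (measure_mono h1).trans ((measure_iUnion_le _).trans (ENNReal.tsum_le_tsum fun k => ?_))
    by_cases hk : k0 ≤ k
    · refine (measure_mono ?_).trans (hcon k hk).le
      exact fun x hx => hx.2
    · simp [hk]
  exact absurd hA (not_lt.2 (h2.trans hw))

lemma count_cover {ι : Type*} {a d : ℝ} {n : ℕ} (ha : 0 ≤ a) (hd : 0 ≤ d) (hdn : d * n ≤ 1)
    {A : Set E2} (S : Finset ι) (g : E2 → ι) (hg : ∀ x ∈ A, g x ∈ S)
    (hA : ∀ x ∈ A, ∀ y ∈ A, g x = g y → ‖x - y‖ ≤ d) :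
    cont a n A ≤ ENNReal.ofReal (S.card * d ^ a) := by
  have h1 : A ⊆ ⋃ i ∈ S, {x | x ∈ A ∧ g x = i} := by
    intro x hx
    simp only [mem_iUnion]
    exact ⟨g x, hg x hx, hx, rfl⟩
  refine (measure_mono h1).trans ((measure_biUnion_finset_le _ _).trans ?_)
  rw [ENNReal.ofReal_mul (by positivity), ENNReal.ofReal_natCast, ← nsmul_eq_mul]
  refine Finset.sum_le_card_nsmul _ _ _ fun i _ => cont_le ha hd hdn ?_
  rintro x ⟨hx, hxi⟩ y ⟨hy, hyi⟩
  exact hA x hx y hy (hxi.trans hyi.symm)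

/-- Single scale configuration. -/
structure Cfg (a b : ℝ) (n : ℕ) (κ δ : ℝ) (Q : Finset (ℤ × ℤ)) (L : Set E2) (f : E2 → ℝ)
    (p : E2 → E2) (A : E2 → Set E2) : Prop where
  unit : ∀ e ∈ L, ‖e‖ = 1
  f_le : ∀ e ∈ L, |f e| ≤ 1
  f_low : ∀ e ∈ L, ∀ e' ∈ L, ‖e - e'‖ ≤ 3 * |f e - f e'|
  f_up : ∀ e ∈ L, ∀ e' ∈ L, |f e - f e'| ≤ ‖e - e'‖
  opp : ∀ e ∈ L, ∀ e' ∈ L, 1 ≤ ‖e + e'‖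
  line : ∀ e ∈ L, ∀ x ∈ A e, ∃ t : ℝ, |t| ≤ n ∧ x = p e + t • e
  inQ : ∀ e ∈ L, ∀ x ∈ A e, idx δ x ∈ Q
  mL : ENNReal.ofReal κ ≤ cont b n L
  mA : ∀ e ∈ L, ENNReal.ofReal κ ≤ cont a n (A e)

lemma dir_close {e e' : E2} {t t' η : ℝ} (he : ‖e‖ = 1) (he' : ‖e'‖ = 1) (ho : 1 ≤ ‖e + e'‖)
    (h : ‖t • e - t' • e'‖ ≤ η) : |t| * ‖e - e'‖ ≤ 4 * η := by
  have h1 : |(|t| - |t'|)| ≤ η := by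
    have := abs_norm_sub_norm_le (t • e) (t' • e')
    rw [norm_smul, norm_smul, he, he', mul_one, mul_one] at this
    simpa using this.trans h
  have hη : 0 ≤ η := (norm_nonneg _).trans h
  rcases le_or_gt 0 (t * t') with ht | ht
  · have h2 : |t - t'| ≤ η := by
      rcases le_total 0 t with h0 | h0 <;> rcases le_total 0 t' with h0' | h0' <;>
        simp only [abs_of_nonneg, abs_of_nonpos, h0, h0'] at h1
      · exact h1
      · have : t = 0 ∨ t' = 0 := by
          by_contra hh
          push Not at hh
          have := mul_neg_of_pos_of_neg (lt_of_le_of_ne h0 hh.1.symm) (lt_of_le_of_ne h0' hh.2)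
          linarith
        rcases this with rfl | rfl
        · rw [abs_le] at *; constructor <;> linarith
        · rw [abs_le] at *; constructor <;> linarith
      · have : t = 0 ∨ t' = 0 := by
          by_contra hh
          push Not at hh
          have := mul_neg_of_neg_of_pos (lt_of_le_of_ne h0 hh.1) (lt_of_le_of_ne h0' hh.2.symm)
          linarith
        rcases this with rfl | rfl
        · rw [abs_le] at *; constructor <;> linarith
        · rw [abs_le] at *; constructor <;> linarith
      · rw [abs_le] at *; constructor <;> linarith
    have h3 : t • (e - e') = (t • e - t' • e') - (t - t') • e' := by
      rw [smul_sub, sub_smul]; abel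
    have h4 : ‖t • (e - e')‖ ≤ η + η := by
      rw [h3]
      refine (norm_sub_le _ _).trans (add_le_add h ?_)
      rw [norm_smul, he', mul_one]; exact h2
    rw [norm_smul, Real.norm_eq_abs] at h4
    linarith
  · have h2 : |t + t'| ≤ η := by
      rcases le_total 0 t with h0 | h0 <;> rcases le_total 0 t' with h0' | h0' <;>
        simp only [abs_of_nonneg, abs_of_nonpos, h0, h0'] at h1
      · have := mul_nonneg h0 h0'; linarith
      · simpa using h1
      · rw [abs_le] at *; constructor <;> linarith
      · have := mul_nonneg_of_nonpos_of_nonpos h0 h0'; linarith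
    have h3 : t • (e + e') = (t • e - t' • e') + (t + t') • e' := by
      rw [smul_add, add_smul]; abel
    have h4 : ‖t • (e + e')‖ ≤ η + η := by
      rw [h3]
      refine (norm_add_le _ _).trans (add_le_add h ?_)
      rw [norm_smul, he', mul_one]; exact h2
    rw [norm_smul, Real.norm_eq_abs] at h4
    have h5 : |t| ≤ 2 * η := by nlinarith [abs_nonneg t]
    have h6 : ‖e - e'‖ ≤ 2 := by
      have := norm_sub_le e e'
      rw [he, he'] at this; linarith
    nlinarith [abs_nonneg t, norm_nonneg (e - e')]

lemma Cfg.pair {a b : ℝ} {n : ℕ} {κ δ : ℝ} {Q : Finset (ℤ × ℤ)} {L : Set E2} {f : E2 → ℝ}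
    {p : E2 → E2} {A : E2 → Set E2} (h : Cfg a b n κ δ Q L f p A) (hδ : 0 < δ)
    {e e' x y x' y' : E2} (he : e ∈ L) (he' : e' ∈ L) (hx : x ∈ A e) (hy : y ∈ A e)
    (hx' : x' ∈ A e') (hy' : y' ∈ A e') (hxx : idx δ x = idx δ x') (hyy : idx δ y = idx δ y') :
    ‖x - y‖ * ‖e - e'‖ ≤ 16 * δ := by
  obtain ⟨t1, -, h1⟩ := h.line e he x hx
  obtain ⟨t2, -, h2⟩ := h.line e he y hy
  obtain ⟨t3, -, h3⟩ := h.line e' he' x' hx'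
  obtain ⟨t4, -, h4⟩ := h.line e' he' y' hy'
  have h5 : x - y = (t1 - t2) • e := by rw [h1, h2, sub_smul]; abel
  have h6 : x' - y' = (t3 - t4) • e' := by rw [h3, h4, sub_smul]; abel
  have h7 : ‖(t1 - t2) • e - (t3 - t4) • e'‖ ≤ 4 * δ := by
    rw [← h5, ← h6]
    have : x - y - (x' - y') = (x - x') - (y - y') := by abel
    rw [this]
    have := norm_sub_le (x - x') (y - y')
    have := idx_close hδ hxx
    have := idx_close hδ hyy
    linarith
  have h8 := dir_close (h.unit e he) (h.unit e' he') (h.opp e he e' he') h7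
  rw [h5, norm_smul, h.unit e he, mul_one, Real.norm_eq_abs]
  linarith

lemma floor_diff_le {δ u v : ℝ} (hδ : 0 < δ) :
    |((⌊u / δ⌋ : ℤ) : ℝ) - (⌊v / δ⌋ : ℤ)| ≤ |u - v| / δ + 1 := by
  have h1 : |u - v| / δ = |u / δ - v / δ| := by rw [← sub_div, abs_div, abs_of_pos hδ]
  rw [h1, abs_le]
  have := Int.floor_le (u / δ)
  have := Int.floor_le (v / δ)
  have := Int.lt_floor_add_one (u / δ)
  have := Int.lt_floor_add_one (v / δ)
  have := le_abs_self (u / δ - v / δ)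
  have := neg_abs_le (u / δ - v / δ)
  constructor <;> linarith

lemma Cfg.bins {a b : ℝ} {n : ℕ} {κ δ : ℝ} {Q : Finset (ℤ × ℤ)} {L : Set E2} {f : E2 → ℝ}
    {p : E2 → E2} {A : E2 → Set E2} (h : Cfg a b n κ δ Q L f p A) (hδ : 0 < δ) (hb : 0 ≤ b)
    (hn : 3 * δ * n ≤ 1) : ∃ F : Finset E2, (∀ e ∈ F, e ∈ L) ∧
      Set.InjOn (fun e => ⌊f e / δ⌋) (F : Set E2) ∧ κ ≤ F.card * (3 * δ) ^ b := by
  classical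
  have hfin : ((fun e => ⌊f e / δ⌋) '' L).Finite := by
    refine (Set.finite_Icc ⌊(-1) / δ⌋ ⌊1 / δ⌋).subset ?_
    rintro _ ⟨e, he, rfl⟩
    have := abs_le.1 (h.f_le e he)
    exact ⟨Int.floor_le_floor (by gcongr; exact this.1), Int.floor_le_floor (by gcongr; exact this.2)⟩
  obtain ⟨s, hsL, hs⟩ := Set.exists_subset_bijOn L (fun e => ⌊f e / δ⌋)
  have hsfin : s.Finite := Set.Finite.of_finite_image (by rw [hs.image_eq]; exact hfin) hs.injOn
  refine ⟨hsfin.toFinset, fun e he => hsL (by simpa using he), by simpa using hs.injOn, ?_⟩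
  have h1 := count_cover (a := b) (d := 3 * δ) hb (by positivity) hn (A := L) hfin.toFinset
    (fun e => ⌊f e / δ⌋) (fun x hx => by rw [Set.Finite.mem_toFinset]; exact ⟨x, hx, rfl⟩) (by
      intro x hx y hy hxy
      have := floor_eq_close hδ hxy
      have := h.f_low x hx y hy
      linarith)
  have hc : hfin.toFinset.card = hsfin.toFinset.card := by
    rw [← Finset.card_image_of_injOn (s := hsfin.toFinset) (f := fun e => ⌊f e / δ⌋)
      (by simpa using hs.injOn)]
    congr 1
    ext m
    simp only [Set.Finite.mem_toFinset, Finset.mem_image]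
    rw [← hs.image_eq]
    rfl
  rw [hc] at h1
  exact (ENNReal.ofReal_le_ofReal_iff (by positivity)).1 (h.mL.trans h1)

lemma bound_one {a b : ℝ} {n : ℕ} {κ δ : ℝ} {Q : Finset (ℤ × ℤ)} {L : Set E2} {f : E2 → ℝ}
    {p : E2 → E2} {A : E2 → Set E2} (h : Cfg a b n κ δ Q L f p A) (hδ : 0 < δ) (ha : 0 ≤ a)
    (hb : 0 ≤ b) (hn : 3 * δ * n ≤ 1) (hκ : 0 < κ) {r : ℝ} (hr : 0 < r) (hrn : 2 * r * n ≤ 1)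
    (hrκ : (2 * r) ^ a ≤ κ / 2) :
    κ / (3 * δ) ^ b * (κ / 2 / (2 * δ) ^ a) ^ 2 ≤ (Q.card : ℝ) ^ 2 * (32 / r + 3) := by
  classical
  obtain ⟨F, hFL, hinj, hM⟩ := h.bins hδ hb hn
  set G := κ / 2 / (2 * δ) ^ a with hG
  have hG0 : 0 < G := by positivity
  have hn2 : 2 * δ * n ≤ 1 := by
    have : 0 ≤ δ * n := by positivity
    linarith
  let Far : E2 → ℤ × ℤ → ℤ × ℤ → Prop := fun e q q' =>
    ∃ x ∈ A e, ∃ y ∈ A e, idx δ x = q ∧ idx δ y = q' ∧ r ≤ ‖x - y‖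
  have hfar1 : ∀ e ∈ L, ∀ x ∈ A e, G ≤ (Q.filter fun q' => Far e (idx δ x) q').card := by
    intro e he x hx
    have hsub : A e ⊆ {y | y ∈ A e ∧ ‖x - y‖ < r} ∪ {y | y ∈ A e ∧ r ≤ ‖x - y‖} := by
      intro y hy
      rcases lt_or_ge ‖x - y‖ r with h1 | h1
      · exact Or.inl ⟨hy, h1⟩
      · exact Or.inr ⟨hy, h1⟩
    have h1 : cont a n {y | y ∈ A e ∧ ‖x - y‖ < r} ≤ ENNReal.ofReal ((2 * r) ^ a) := by
      refine cont_le ha (by positivity) hrn ?_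
      rintro y ⟨-, hy⟩ z ⟨-, hz⟩
      have : y - z = (x - z) - (x - y) := by abel
      rw [this]
      have := norm_sub_le (x - z) (x - y)
      linarith
    have h2 : cont a n {y | y ∈ A e ∧ r ≤ ‖x - y‖} ≤
        ENNReal.ofReal ((Q.filter fun q' => Far e (idx δ x) q').card * (2 * δ) ^ a) := by
      refine count_cover ha (by positivity) hn2 _ (idx δ) ?_ (fun x _ y _ hxy => idx_close hδ hxy)
      rintro y ⟨hy, hxy⟩
      rw [Finset.mem_filter]
      exact ⟨h.inQ e he y hy, x, hx, y, hy, rfl, rfl, hxy⟩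
    have h3 := (h.mA e he).trans ((measure_mono hsub).trans ((measure_union_le _ _).trans
      (add_le_add h1 h2)))
    rw [← ENNReal.ofReal_add (by positivity) (by positivity),
      ENNReal.ofReal_le_ofReal_iff (by positivity)] at h3
    rw [hG, div_le_iff₀ (by positivity)]
    linarith
  have hfar2 : ∀ e ∈ L, G ≤ (Q.filter fun q => ∃ x ∈ A e, idx δ x = q).card := by
    intro e he
    have h2 : cont a n (A e) ≤
        ENNReal.ofReal ((Q.filter fun q => ∃ x ∈ A e, idx δ x = q).card * (2 * δ) ^ a) := by
      refine count_cover ha (by positivity) hn2 _ (idx δ) ?_ (fun x _ y _ hxy => idx_close hδ hxy)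
      intro y hy
      rw [Finset.mem_filter]
      exact ⟨h.inQ e he y hy, y, hy, rfl⟩
    have h3 := (h.mA e he).trans h2
    rw [ENNReal.ofReal_le_ofReal_iff (by positivity)] at h3
    rw [hG, div_le_iff₀ (by positivity)]
    linarith
  have hlow : ∀ e ∈ F, G ^ 2 ≤ ((Q ×ˢ Q).filter fun z => Far e z.1 z.2).card := by
    intro e he
    have he := hFL e he
    have : (((Q ×ˢ Q).filter fun z => Far e z.1 z.2).card : ℝ) =
        ∑ q ∈ Q, ((Q.filter fun q' => Far e q q').card : ℝ) := by
      rw [Finset.card_filter, Finset.sum_product]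
      push_cast
      refine Finset.sum_congr rfl fun q _ => ?_
      rw [Finset.card_filter]
      push_cast
      rfl
    rw [this]
    calc G ^ 2 = G * G := sq G
      _ ≤ (Q.filter fun q => ∃ x ∈ A e, idx δ x = q).card * G := by
          gcongr; exact hfar2 e he
      _ = ∑ q ∈ (Q.filter fun q => ∃ x ∈ A e, idx δ x = q), G := by
          rw [Finset.sum_const, nsmul_eq_mul]
      _ ≤ ∑ q ∈ (Q.filter fun q => ∃ x ∈ A e, idx δ x = q),
            ((Q.filter fun q' => Far e q q').card : ℝ) := by
          refine Finset.sum_le_sum fun q hq => ?_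
          obtain ⟨x, hx, rfl⟩ := (Finset.mem_filter.1 hq).2
          exact hfar1 e he x hx
      _ ≤ _ := Finset.sum_le_sum_of_subset_of_nonneg (Finset.filter_subset _ _)
          (fun _ _ _ => by positivity)
  have hup : ∀ z ∈ Q ×ˢ Q, ((F.filter fun e => Far e z.1 z.2).card : ℝ) ≤ 32 / r + 3 := by
    intro z _
    rcases (F.filter fun e => Far e z.1 z.2).eq_empty_or_nonempty with h0 | ⟨e0, he0⟩
    · rw [h0, Finset.card_empty]; push_cast; positivity
    · rw [Finset.mem_filter] at he0
      obtain ⟨he0F, x0, hx0, y0, hy0, hz1, hz2, -⟩ := he0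
      set K : ℕ := ⌊16 / r⌋₊ + 1 with hK
      have hcard : (F.filter fun e => Far e z.1 z.2).card ≤
          (Finset.Icc (⌊f e0 / δ⌋ - K) (⌊f e0 / δ⌋ + K)).card := by
        refine Finset.card_le_card_of_injOn (fun e => ⌊f e / δ⌋) ?_
          (hinj.mono (fun e he => (Finset.mem_filter.1 he).1))
        intro e he
        obtain ⟨heF, x, hx, y, hy, hz1', hz2', hxy⟩ := Finset.mem_filter.1 he
        have h1 := h.pair hδ (hFL e heF) (hFL e0 he0F) hx hy hx0 hy0 (hz1'.trans hz1.symm)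
          (hz2'.trans hz2.symm)
        have h2 := h.f_up e (hFL e heF) e0 (hFL e0 he0F)
        have h3 : |f e - f e0| / δ ≤ 16 / r := by
          rw [div_le_div_iff₀ hδ hr]
          have : r * ‖e - e0‖ ≤ ‖x - y‖ * ‖e - e0‖ := by gcongr
          nlinarith
        have h4 := floor_diff_le (u := f e) (v := f e0) hδ
        have h5 : |⌊f e / δ⌋ - ⌊f e0 / δ⌋| ≤ (K : ℤ) := by
          have h6 : ((|⌊f e / δ⌋ - ⌊f e0 / δ⌋| - 1 : ℤ) : ℝ) ≤ 16 / r := by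
            push_cast; linarith
          have h7 := Int.le_floor.2 h6
          have h8 : (⌊16 / r⌋₊ : ℤ) = ⌊16 / r⌋ := Int.natCast_floor_eq_floor (by positivity)
          rw [hK]; push_cast; omega
        rw [abs_le] at h5
        simp only [Finset.coe_Icc, Set.mem_Icc]
        omega
      have h9 : (Finset.Icc (⌊f e0 / δ⌋ - K) (⌊f e0 / δ⌋ + (K : ℤ))).card = 2 * K + 1 := by
        rw [Int.card_Icc]; omega
      rw [h9] at hcard
      have h10 : (⌊16 / r⌋₊ : ℝ) ≤ 16 / r := Nat.floor_le (by positivity)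
      have h11 : ((F.filter fun e => Far e z.1 z.2).card : ℝ) ≤ 2 * K + 1 := by exact_mod_cast hcard
      have h12 : (K : ℝ) = ⌊16 / r⌋₊ + 1 := by rw [hK]; push_cast; rfl
      have h13 : 32 / r = 2 * (16 / r) := by ring
      rw [h13]; linarith
  have hdc : ∑ e ∈ F, (((Q ×ˢ Q).filter fun z => Far e z.1 z.2).card : ℝ) =
      ∑ z ∈ Q ×ˢ Q, ((F.filter fun e => Far e z.1 z.2).card : ℝ) := by
    have := Finset.sum_card_bipartiteAbove_eq_sum_card_bipartiteBelow (s := F) (t := Q ×ˢ Q)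
      (fun e z => Far e z.1 z.2)
    exact_mod_cast this
  calc κ / (3 * δ) ^ b * G ^ 2 ≤ F.card * G ^ 2 := by
        gcongr
        rw [div_le_iff₀ (by positivity)]; exact hM
    _ = ∑ e ∈ F, G ^ 2 := by rw [Finset.sum_const, nsmul_eq_mul]
    _ ≤ ∑ e ∈ F, (((Q ×ˢ Q).filter fun z => Far e z.1 z.2).card : ℝ) := Finset.sum_le_sum hlow
    _ = _ := hdc
    _ ≤ ∑ z ∈ Q ×ˢ Q, (32 / r + 3) := Finset.sum_le_sum hup
    _ = _ := by rw [Finset.sum_const, nsmul_eq_mul, Finset.card_product]; push_cast; ring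

lemma line_count {δ T : ℝ} (hδ : 0 < δ) (hT : 0 ≤ T) {e x0 : E2} (he : ‖e‖ = 1)
    (P : Finset (ℤ × ℤ)) (hP : ∀ q ∈ P, ∃ t : ℝ, |t| ≤ T ∧ idx δ (x0 + t • e) = q) :
    (P.card : ℝ) ≤ 9 * (2 * (T / δ) + 2) := by
  classical
  choose! t ht htq using hP
  have h1 : P.card ≤ (Finset.Icc ⌊(-T) / δ⌋ ⌊T / δ⌋ ×ˢ
      (Finset.Icc (-1 : ℤ) 1 ×ˢ Finset.Icc (-1 : ℤ) 1)).card := by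
    refine Finset.card_le_card_of_injOn
      (fun q => (⌊t q / δ⌋, q - idx δ (x0 + ((⌊t q / δ⌋ : ℝ) * δ) • e))) ?_ ?_
    · intro q hq
      have hq' : q ∈ P := hq
      rw [Finset.mem_coe, Finset.mem_product]
      refine ⟨?_, ?_⟩
      · have := abs_le.1 (ht q hq')
        exact Finset.mem_Icc.2 ⟨Int.floor_le_floor (by gcongr; exact this.1),
          Int.floor_le_floor (by gcongr; exact this.2)⟩
      · dsimp only
        nth_rewrite 1 [← htq q hq']
        refine idx_near hδ ?_
        have : x0 + t q • e - (x0 + ((⌊t q / δ⌋ : ℝ) * δ) • e) = (t q - (⌊t q / δ⌋ : ℝ) * δ) • e := by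
          rw [sub_smul]; abel
        rw [this, norm_smul, he, mul_one, Real.norm_eq_abs]
        have h2 := Int.floor_le (t q / δ)
        have h3 := Int.lt_floor_add_one (t q / δ)
        rw [le_div_iff₀ hδ] at h2
        rw [div_lt_iff₀ hδ] at h3
        rw [abs_le]; constructor <;> linarith
    · intro q hq q' hq' hqq
      simp only [Prod.mk.injEq] at hqq
      obtain ⟨h2, h3⟩ := hqq
      rw [h2] at h3
      exact sub_left_injective h3
  rw [Finset.card_product, Int.card_Icc] at h1
  have h2 : (Finset.Icc (-1 : ℤ) 1 ×ˢ Finset.Icc (-1 : ℤ) 1).card = 9 := by decide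
  rw [h2] at h1
  have h3 : ⌊(-T) / δ⌋ ≤ ⌊T / δ⌋ := Int.floor_le_floor (by gcongr; linarith)
  have h4 : (((⌊T / δ⌋ + 1 - ⌊(-T) / δ⌋).toNat : ℕ) : ℝ) ≤ 2 * (T / δ) + 2 := by
    have h5 : (((⌊T / δ⌋ + 1 - ⌊(-T) / δ⌋).toNat : ℤ) : ℝ) = ((⌊T / δ⌋ + 1 - ⌊(-T) / δ⌋ : ℤ) : ℝ) := by
      rw [Int.toNat_of_nonneg (by omega)]
    rw [Int.cast_natCast] at h5
    rw [h5]
    push_cast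
    have := Int.floor_le (T / δ)
    have := Int.lt_floor_add_one ((-T) / δ)
    have h6 : (-T) / δ = - (T / δ) := neg_div _ _
    linarith
  have h5 : (P.card : ℝ) ≤ ((⌊T / δ⌋ + 1 - ⌊(-T) / δ⌋).toNat : ℕ) * 9 := by exact_mod_cast h1
  linarith

lemma harm_sum (T : Finset ℤ) (K : ℕ) (hT : ∀ m ∈ T, |m| ≤ K) :
    ∑ m ∈ T, 1 / (1 + |(m : ℝ)|) ≤ 2 * (1 + Real.log (K + 1)) := by
  classical
  have h1 : ∑ m ∈ T, 1 / (1 + |(m : ℝ)|) =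
      ∑ j ∈ Finset.range (K + 1), ∑ m ∈ T with m.natAbs = j, 1 / (1 + |(m : ℝ)|) := by
    rw [Finset.sum_fiberwise_of_maps_to]
    intro m hm
    have := abs_le.1 (hT m hm)
    rw [Finset.mem_range]; omega
  have h2 : ∀ j ∈ Finset.range (K + 1), ∑ m ∈ T with m.natAbs = j, 1 / (1 + |(m : ℝ)|) ≤
      2 * ((j : ℝ) + 1)⁻¹ := by
    intro j _
    have h3 : ∀ m ∈ T.filter (fun m => m.natAbs = j), 1 / (1 + |(m : ℝ)|) = ((j : ℝ) + 1)⁻¹ := by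
      intro m hm
      rw [Finset.mem_filter] at hm
      rw [← hm.2, Nat.cast_natAbs, one_div, add_comm]
      push_cast; rfl
    rw [Finset.sum_congr rfl h3, Finset.sum_const, nsmul_eq_mul]
    gcongr
    have h4 : (T.filter (fun m => m.natAbs = j)).card ≤ ({(j : ℤ), -(j : ℤ)} : Finset ℤ).card := by
      apply Finset.card_le_card
      intro m hm
      rw [Finset.mem_filter] at hm
      simp only [Finset.mem_insert, Finset.mem_singleton]
      omega
    exact_mod_cast h4.trans Finset.card_le_two
  rw [h1]
  refine (Finset.sum_le_sum h2).trans ?_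
  rw [← Finset.mul_sum]
  have h5 := harmonic_le_one_add_log (K + 1)
  unfold harmonic at h5
  push_cast at h5
  linarith

lemma bound_two {a b : ℝ} {n : ℕ} {κ δ : ℝ} {Q : Finset (ℤ × ℤ)} {L : Set E2} {f : E2 → ℝ}
    {p : E2 → E2} {A : E2 → Set E2} (h : Cfg a b n κ δ Q L f p A) (hδ : 0 < δ) (ha : 0 ≤ a)
    (hb : 0 ≤ b) (hn : 3 * δ * n ≤ 1) (hκ : 0 < κ) (K : ℕ) (hK : 2 / δ + 1 ≤ K) :
    κ / (3 * δ) ^ b * (κ / (2 * δ) ^ a) ^ 2 ≤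
      Q.card * ((18 * ((16 + 4 * n) / δ + K + 1)) * (2 * (1 + Real.log (K + 1)))) := by
  classical
  obtain ⟨F, hFL, hinj, hM⟩ := h.bins hδ hb hn
  set G := κ / (2 * δ) ^ a with hG
  have hG0 : 0 < G := by positivity
  have hn2 : 2 * δ * n ≤ 1 := by
    have : 0 ≤ δ * n := by positivity
    linarith
  set W := 18 * ((16 + 4 * n) / δ + K + 1) with hW
  have hW0 : 0 < W := by positivity
  let P : E2 → Finset (ℤ × ℤ) := fun e => Q.filter fun q => ∃ x ∈ A e, idx δ x = q
  have hP : ∀ e ∈ L, G ≤ (P e).card := by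
    intro e he
    have h2 : cont a n (A e) ≤ ENNReal.ofReal ((P e).card * (2 * δ) ^ a) := by
      refine count_cover ha (by positivity) hn2 _ (idx δ) ?_ (fun x _ y _ hxy => idx_close hδ hxy)
      intro y hy
      rw [Finset.mem_filter]
      exact ⟨h.inQ e he y hy, y, hy, rfl⟩
    have h3 := (h.mA e he).trans h2
    rw [ENNReal.ofReal_le_ofReal_iff (by positivity)] at h3
    rw [hG, div_le_iff₀ (by positivity)]
    linarith
  let D : E2 → E2 → ℤ := fun e e' => ⌊f e' / δ⌋ - ⌊f e / δ⌋
  have hDK : ∀ e ∈ L, ∀ e' ∈ L, |(D e e' : ℝ)| ≤ K := by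
    intro e he e' he'
    have h1 := floor_diff_le (u := f e') (v := f e) hδ
    have h2 : |f e' - f e| ≤ 2 := by
      have := abs_sub (f e') (f e)
      have := h.f_le e he
      have := h.f_le e' he'
      linarith
    have h3 : |f e' - f e| / δ ≤ 2 / δ := by gcongr
    simp only [D]; push_cast; linarith
  have hinter : ∀ e ∈ L, ∀ e' ∈ L, ((P e ∩ P e').card : ℝ) ≤ W * (1 / (1 + |(D e e' : ℝ)|)) := by
    intro e he e' he'
    rcases (P e ∩ P e').eq_empty_or_nonempty with h0 | ⟨q0, hq0⟩
    · rw [h0, Finset.card_empty]; push_cast; positivity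
    rw [Finset.mem_inter, Finset.mem_filter, Finset.mem_filter] at hq0
    obtain ⟨⟨-, x0, hx0, hx0q⟩, -, x0', hx0', hx0q'⟩ := hq0
    have hD := hDK e he e' he'
    set d := |(D e e' : ℝ)| with hd
    have hd0 : 0 ≤ d := abs_nonneg _
    have hdf : (d - 1) * δ ≤ ‖e - e'‖ := by
      have h1 := floor_diff_le (u := f e') (v := f e) hδ
      have h2 := h.f_up e' he' e he
      rw [norm_sub_rev] at h2
      have h3 : d - 1 ≤ |f e' - f e| / δ := by
        simp only [hd, D]; push_cast; linarith
      rw [le_div_iff₀ hδ] at h3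
      linarith
    have h1 : ((P e ∩ P e').card : ℝ) ≤ 9 * (2 * ((16 + 4 * n) / (1 + d) / δ) + 2) := by
      refine line_count hδ (by positivity) (h.unit e he) (x0 := x0) _ ?_
      intro q hq
      rw [Finset.mem_inter, Finset.mem_filter, Finset.mem_filter] at hq
      obtain ⟨⟨-, x, hx, hxq⟩, -, x', hx', hxq'⟩ := hq
      have h2 := h.pair hδ he he' hx hx0 hx' hx0' (hxq.trans hxq'.symm) (hx0q.trans hx0q'.symm)
      obtain ⟨t, ht, hxt⟩ := h.line e he x hx
      obtain ⟨t0, ht0, hxt0⟩ := h.line e he x0 hx0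
      have h3 : x - x0 = (t - t0) • e := by rw [hxt, hxt0, sub_smul]; abel
      refine ⟨t - t0, ?_, by rw [← h3, add_sub_cancel, hxq]⟩
      rw [h3, norm_smul, h.unit e he, mul_one, Real.norm_eq_abs] at h2
      have h4 : |t - t0| ≤ 2 * n := by
        have := abs_sub t t0
        linarith
      rw [le_div_iff₀ (by positivity)]
      have h5 : |t - t0| * ((d - 1) * δ) ≤ 16 * δ :=
        (mul_le_mul_of_nonneg_left hdf (abs_nonneg _)).trans h2
      have h6 : |t - t0| * (d - 1) ≤ 16 := by
        rw [← mul_assoc] at h5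
        exact le_of_mul_le_mul_right h5 hδ
      nlinarith
    refine h1.trans ?_
    have h7 : (1 : ℝ) ≤ (K + 1) / (1 + d) := by
      rw [le_div_iff₀ (by positivity)]; linarith
    have h8 : W * (1 / (1 + d)) = 18 * ((16 + 4 * n) / (1 + d) / δ) + 18 * ((K + 1) / (1 + d)) := by
      rw [hW]; field_simp; ring
    rw [h8]; linarith
  have hrow : ∀ e ∈ F, ∑ e' ∈ F, ((P e ∩ P e').card : ℝ) ≤ W * (2 * (1 + Real.log (K + 1))) := by
    intro e he
    calc ∑ e' ∈ F, ((P e ∩ P e').card : ℝ) ≤ ∑ e' ∈ F, W * (1 / (1 + |(D e e' : ℝ)|)) :=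
          Finset.sum_le_sum fun e' he' => hinter e (hFL e he) e' (hFL e' he')
      _ = W * ∑ e' ∈ F, (1 / (1 + |(D e e' : ℝ)|)) := by rw [Finset.mul_sum]
      _ = W * ∑ m ∈ F.image (D e), (1 / (1 + |(m : ℝ)|)) := by
          rw [Finset.sum_image]
          intro x hx y hy hxy
          exact hinj hx hy (sub_left_injective hxy)
      _ ≤ _ := by
          gcongr
          refine harm_sum _ K ?_
          intro m hm
          obtain ⟨e', he', rfl⟩ := Finset.mem_image.1 hm
          have := hDK e (hFL e he) e' (hFL e' he')
          exact_mod_cast this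
  set H := W * (2 * (1 + Real.log (K + 1))) with hH
  let ind : E2 → ℤ × ℤ → ℝ := fun e q => if q ∈ P e then 1 else 0
  have hPQ : ∀ e, P e ⊆ Q := fun e => Finset.filter_subset _ _
  have hind : ∀ e, ∑ q ∈ Q, ind e q = (P e).card := by
    intro e
    simp only [ind]
    rw [Finset.sum_boole, Finset.filter_mem_eq_inter, Finset.inter_eq_right.2 (hPQ e)]
  have hind2 : ∀ e e', ∑ q ∈ Q, ind e q * ind e' q = (P e ∩ P e').card := by
    intro e e'
    have : ∀ q, ind e q * ind e' q = if q ∈ P e ∩ P e' then 1 else 0 := by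
      intro q
      simp only [ind, Finset.mem_inter]
      by_cases h1 : q ∈ P e <;> by_cases h2 : q ∈ P e' <;> simp [h1, h2]
    simp only [this]
    rw [Finset.sum_boole, Finset.filter_mem_eq_inter,
      Finset.inter_eq_right.2 (Finset.inter_subset_left.trans (hPQ e))]
  have hCS : (F.card * G) ^ 2 ≤ Q.card * (F.card * H) := by
    calc (F.card * G) ^ 2 ≤ (∑ q ∈ Q, ∑ e ∈ F, ind e q) ^ 2 := by
          gcongr
          rw [Finset.sum_comm]
          simp only [hind]
          rw [← nsmul_eq_mul]
          exact Finset.card_nsmul_le_sum _ _ _ fun e he => hP e (hFL e he)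
      _ ≤ Q.card * ∑ q ∈ Q, (∑ e ∈ F, ind e q) ^ 2 := sq_sum_le_card_mul_sum_sq
      _ = Q.card * ∑ e ∈ F, ∑ e' ∈ F, ((P e ∩ P e').card : ℝ) := by
          congr 1
          simp only [← hind2, sq, Finset.sum_mul_sum]
          rw [Finset.sum_comm]
          refine Finset.sum_congr rfl fun e _ => ?_
          rw [Finset.sum_comm]
      _ ≤ Q.card * (F.card * H) := by
          gcongr
          rw [← nsmul_eq_mul]
          exact Finset.sum_le_card_nsmul _ _ _ hrow
  have hF0 : (0 : ℝ) < F.card := by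
    by_contra hcon
    have : (F.card : ℝ) = 0 := le_antisymm (not_lt.1 hcon) (by positivity)
    rw [this, zero_mul] at hM
    linarith
  have hfin : F.card * G ^ 2 ≤ Q.card * H := by
    have : F.card * (F.card * G ^ 2) ≤ F.card * (Q.card * H) := by linarith [hCS]
    exact le_of_mul_le_mul_left this hF0
  refine le_trans ?_ hfin
  gcongr
  rw [div_le_iff₀ (by positivity)]; exact hM

lemma reduction {α β : ℝ} {E : Set E2}
    (hE : ∃ L ⊆ Metric.sphere (0 : E2) 1, ENNReal.ofReal β ≤ dimH L ∧
      ∀ e ∈ L, ∃ ℓ : Set E2, IsSegment ℓ e ∧ ENNReal.ofReal α ≤ dimH (E ∩ ℓ))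
    {a b s ρ : ℝ} (ha : 0 < a) (haα : a < α) (hb : 0 < b) (hbβ : b < β) (hs : 0 < s)
    (hsE : dimH E < ENNReal.ofReal s) (hρ0 : 0 < ρ) (hρ1 : ρ < 1) :
    ∃ n : ℕ, ∀ k0 : ℕ, ∃ k ≥ k0, ∃ (Q : Finset (ℤ × ℤ)) (L : Set E2) (f : E2 → ℝ)
      (p : E2 → E2) (A : E2 → Set E2), (Q.card : ℝ) ≤ 9 * ((2 : ℝ) ^ k) ^ s ∧
        Cfg a b n ((1 - ρ) * ρ ^ k) ((1 / 2) ^ k) Q L f p A := by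
  obtain ⟨L, hLs, hLd, hL⟩ := hE
  have h1 : ∀ e ∈ L, ∃ p : E2, ∃ n : ℕ,
      1 < cont a n (E ∩ (fun t : ℝ => p + t • e) '' {t | |t| ≤ n}) := by
    intro e he
    obtain ⟨ℓ, ⟨p, u, v, huv, rfl⟩, hd⟩ := hL e he
    have hlt : ENNReal.ofReal a < dimH (E ∩ (fun t : ℝ => p + t • e) '' Set.Icc u v) :=
      lt_of_lt_of_le ((ENNReal.ofReal_lt_ofReal_iff (ha.trans haα)).2 haα) hd
    obtain ⟨n, hn⟩ := exists_cont ha.le hlt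
    obtain ⟨m, hm⟩ := exists_nat_ge (max |u| |v|)
    refine ⟨p, max n m, lt_of_lt_of_le hn ((cont_mono (le_max_left n m) _).trans
      (measure_mono (inter_subset_inter_right _ (image_mono ?_))))⟩
    rintro t ⟨ht1, ht2⟩
    have h3 : |t| ≤ max |u| |v| := abs_le_max_abs_abs ht1 ht2
    have h4 : (m : ℝ) ≤ (max n m : ℕ) := by exact_mod_cast le_max_right n m
    exact h3.trans (hm.trans h4)
  choose! p N hN using h1
  let A0 : E2 → ℕ → Set E2 := fun e n => E ∩ (fun t : ℝ => p e + t • e) '' {t | |t| ≤ n}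
  let sg : Bool → ℝ := fun σ => if σ then 1 else -1
  let Z : Fin 2 × Bool × ℕ → Set E2 := fun z =>
    {e | e ∈ L ∧ 1 / 2 ≤ sg z.2.1 * e z.1 ∧ 1 < cont a z.2.2 (A0 e z.2.2)}
  have hsq : ∀ e ∈ L, e 0 ^ 2 + e 1 ^ 2 = 1 := by
    intro e he
    have h2 : ‖e‖ = 1 := by simpa using hLs he
    have h3 := EuclideanSpace.norm_sq_eq e
    rw [h2, Fin.sum_univ_two] at h3
    simp only [Real.norm_eq_abs, sq_abs] at h3
    linarith
  have hcov : L ⊆ ⋃ z, Z z := by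
    intro e he
    have h4 := hsq e he
    have h5 : ∃ (i : Fin 2) (σ : Bool), 1 / 2 ≤ sg σ * e i := by
      by_contra hcon
      push Not at hcon
      have h01 := hcon 0 true
      have h02 := hcon 0 false
      have h11 := hcon 1 true
      have h12 := hcon 1 false
      simp only [sg, if_true, Bool.false_eq_true, if_false] at h01 h02 h11 h12
      nlinarith
    obtain ⟨i, σ, h6⟩ := h5
    exact mem_iUnion.2 ⟨(i, σ, N e), he, h6, hN e he⟩
  have hlt : ENNReal.ofReal b < dimH (⋃ z, Z z) :=
    lt_of_lt_of_le ((ENNReal.ofReal_lt_ofReal_iff (hb.trans hbβ)).2 hbβ) (hLd.trans (dimH_mono hcov))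
  rw [dimH_iUnion, lt_iSup_iff] at hlt
  obtain ⟨⟨i, σ, n1⟩, hz⟩ := hlt
  obtain ⟨n2, hn2⟩ := exists_cont hb.le hz
  set n := max n1 n2 with hn
  set Y := Z (i, σ, n1) with hY
  have hYL : ∀ e ∈ Y, e ∈ L := fun e he => he.1
  have hYA : ∀ e ∈ Y, 1 < cont a n (A0 e n) := by
    rintro e ⟨-, -, he⟩
    refine lt_of_lt_of_le he ((cont_mono (le_max_left n1 n2) _).trans
      (measure_mono (inter_subset_inter_right _ (image_mono ?_))))
    intro t (ht : |t| ≤ n1)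
    have : (n1 : ℝ) ≤ n := by exact_mod_cast le_max_left n1 n2
    exact ht.trans this
  have hYb : 1 < cont b n Y := lt_of_lt_of_le hn2 (cont_mono (le_max_right n1 n2) _)
  have hw : ∑' k : ℕ, ENNReal.ofReal ((1 - ρ) * ρ ^ k) ≤ 1 := by
    rw [← ENNReal.ofReal_tsum_of_nonneg]
    · rw [tsum_mul_left, tsum_geometric_of_lt_one hρ0.le hρ1, mul_inv_cancel₀ (by linarith)]
      simp
    · intro k
      have : 0 ≤ 1 - ρ := by linarith
      positivity
    · exact (summable_geometric_of_lt_one hρ0.le hρ1).mul_left _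
  refine ⟨n, fun k0 => ?_⟩
  obtain ⟨Q, hQc, hQ⟩ := cover_lemma hs hsE k0
  obtain ⟨k, hk, hkY⟩ := pigeon (cont b n) hYb
    (fun k => {e | ENNReal.ofReal ((1 - ρ) * ρ ^ k) ≤
      cont a n ({x | idx ((1 / 2) ^ k) x ∈ Q k} ∩ A0 e n)}) k0 (fun e he => by
        exact pigeon (cont a n) (hYA e he) (fun k => {x | idx ((1 / 2) ^ k) x ∈ Q k}) k0
          (fun x hx => hQ x hx.1) _ hw) _ hw
  -- the coordinates
  have hj : ∃ j : Fin 2, (∀ e : E2, e 0 ^ 2 + e 1 ^ 2 = e i ^ 2 + e j ^ 2) ∧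
      (∀ e : E2, |e 0| + |e 1| = |e i| + |e j|) := by
    fin_cases i
    · exact ⟨1, fun e => rfl, fun e => rfl⟩
    · exact ⟨0, fun e => add_comm _ _, fun e => add_comm _ _⟩
  obtain ⟨j, hj1, hj2⟩ := hj
  have hsg : |sg σ| = 1 := by cases σ <;> simp [sg]
  have hYi : ∀ e ∈ Y, 1 / 2 ≤ sg σ * e i := fun e he => he.2.1
  have hadd : ∀ e ∈ Y, ∀ e' ∈ Y, 1 ≤ |e i + e' i| := by
    intro e he e' he'
    have h1 := hYi e he
    have h2 := hYi e' he'
    have h3 : |e i + e' i| = |sg σ * (e i + e' i)| := by rw [abs_mul, hsg, one_mul]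
    rw [h3]
    refine le_trans ?_ (le_abs_self _)
    linarith
  have hfle : ∀ e ∈ Y, |e j| ≤ 1 := by
    intro e he
    have h1 := hsq e (hYL e he)
    rw [hj1] at h1
    rw [abs_le_one_iff_mul_self_le_one]
    nlinarith [sq_nonneg (e i)]
  refine ⟨k, hk, Q k, {e | ENNReal.ofReal ((1 - ρ) * ρ ^ k) ≤ cont a n ({x | idx ((1 / 2) ^ k) x ∈ Q k} ∩ A0 e n)} ∩ Y, fun e => e j, p,
    fun e => {x | idx ((1 / 2) ^ k) x ∈ Q k} ∩ A0 e n, hQc k, ?_⟩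
  refine ⟨?_, ?_, ?_, ?_, ?_, ?_, ?_, hkY, ?_⟩
  · rintro e ⟨-, he⟩
    simpa using hLs (hYL e he)
  · rintro e ⟨-, he⟩
    exact hfle e he
  · rintro e ⟨-, he⟩ e' ⟨-, he'⟩
    have h1 := hsq e (hYL e he)
    have h2 := hsq e' (hYL e' he')
    rw [hj1] at h1 h2
    have h3 := hadd e he e' he'
    have h4 : |e i - e' i| * |e i + e' i| = |e j - e' j| * |e j + e' j| := by
      rw [← abs_mul, ← abs_mul, ← abs_neg ((e j - e' j) * (e j + e' j))]
      congr 1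
      linarith
    have h5 : |e j + e' j| ≤ 2 := by
      have := abs_add_le (e j) (e' j)
      have := hfle e he
      have := hfle e' he'
      linarith
    have h6 : |e i - e' i| ≤ 2 * |e j - e' j| := by
      nlinarith [abs_nonneg (e i - e' i), abs_nonneg (e j - e' j)]
    have h7 := norm_le_coords (e - e')
    rw [hj2] at h7
    simp only [PiLp.sub_apply] at h7
    linarith
  · rintro e ⟨-, he⟩ e' ⟨-, he'⟩
    exact coord_le_norm (e - e') j
  · rintro e ⟨-, he⟩ e' ⟨-, he'⟩
    exact (hadd e he e' he').trans (coord_le_norm (e + e') i)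
  · rintro e - x ⟨-, -, t, ht, rfl⟩
    exact ⟨t, ht, rfl⟩
  · rintro e - x ⟨hx, -⟩
    exact hx
  · rintro e ⟨he, -⟩
    exact he

lemma ev_contra {η C : ℝ} (hη : 0 < η) : ∀ᶠ X : ℝ in Filter.atTop, C < X ^ η :=
  (tendsto_rpow_atTop hη).eventually (Filter.eventually_gt_atTop C)

lemma lhs_eq {a b c ε X : ℝ} (hX : 0 < X) :
    (c * X ^ (-ε)) / (3 * X⁻¹) ^ b * (c * X ^ (-ε) / (2 * X⁻¹) ^ a) ^ 2 =
      c ^ 3 / (3 ^ b * (2 ^ a) ^ 2) * X ^ (b + 2 * a - 3 * ε) := by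
  have h1 : X ^ (b + 2 * a - 3 * ε) = X ^ b * (X ^ a) ^ 2 * (X ^ (-ε)) ^ 3 := by
    rw [← Real.rpow_natCast, ← Real.rpow_natCast, ← Real.rpow_mul hX.le, ← Real.rpow_mul hX.le,
      ← Real.rpow_add hX, ← Real.rpow_add hX]
    congr 1
    push_cast; ring
  rw [h1, Real.mul_rpow (by norm_num) (by positivity), Real.mul_rpow (by norm_num) (by positivity),
    Real.inv_rpow hX.le, Real.inv_rpow hX.le]
  have := Real.rpow_pos_of_pos hX b
  have := Real.rpow_pos_of_pos hX a
  field_simp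

lemma theta {u v : ℝ} (hu : 0 ≤ u) (h : u < v) : ∃ θ : ℝ, 0 < θ ∧ θ < 1 ∧ u < θ * v := by
  have hv : 0 < v := lt_of_le_of_lt hu h
  have h1 : u / v < 1 := (div_lt_one hv).2 h
  have h2 : 0 ≤ u / v := by positivity
  have h3 : u = u / v * v := by field_simp
  refine ⟨(u / v + 1) / 2, by linarith, by linarith, ?_⟩
  rw [← div_lt_iff₀ hv]; linarith

lemma pow_conv {ε : ℝ} (k : ℕ) : ((2 : ℝ) ^ (-ε)) ^ k = ((2 : ℝ) ^ k) ^ (-ε) := by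
  rw [← Real.rpow_natCast, ← Real.rpow_natCast, ← Real.rpow_mul (by norm_num),
    ← Real.rpow_mul (by norm_num), mul_comm]

lemma part_one {α β : ℝ} (hα : 0 < α) (hβ : 0 < β) {E : Set E2}
    (hE : ∃ L ⊆ Metric.sphere (0 : E2) 1, ENNReal.ofReal β ≤ dimH L ∧
      ∀ e ∈ L, ∃ ℓ : Set E2, IsSegment ℓ e ∧ ENNReal.ofReal α ≤ dimH (E ∩ ℓ)) :
    ENNReal.ofReal (α + β / 2) ≤ dimH E := by
  by_contra hcon
  rw [not_le] at hcon
  obtain ⟨s', hs1, hs2⟩ := ENNReal.lt_iff_exists_nnreal_btwn.1 hcon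
  set s : ℝ := NNReal.toReal s' with hs
  have hsE : dimH E < ENNReal.ofReal s := by rwa [hs, ENNReal.ofReal_coe_nnreal]
  have hs0 : 0 < s := by
    have : (0 : ℝ≥0∞) < s' := lt_of_le_of_lt (zero_le) hs1
    exact_mod_cast this
  have hsαβ : s < α + β / 2 := by
    rw [← ENNReal.ofReal_coe_nnreal, ENNReal.ofReal_lt_ofReal_iff (by positivity)] at hs2
    exact hs2
  obtain ⟨θ, hθ0, hθ1, hθ⟩ := theta hs0.le hsαβ
  set a := θ * α with hadef
  set b := θ * β with hbdef
  have ha : 0 < a := by positivity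
  have hb : 0 < b := by positivity
  have haα : a < α := by nlinarith
  have hbβ : b < β := by nlinarith
  have hab : 0 < b + 2 * a - 2 * s := by rw [hadef, hbdef]; linarith
  set η := b + 2 * a - 2 * s with hη
  set ε := η / (2 * (3 + 1 / a)) with hε
  have hε0 : 0 < ε := by positivity
  have hεη : ε * (3 + 1 / a) = η / 2 := by rw [hε]; field_simp
  have hρ1 : (2 : ℝ) ^ (-ε) < 1 := Real.rpow_lt_one_of_one_lt_of_neg (by norm_num) (by linarith)
  obtain ⟨n, hred⟩ := reduction hE ha haα hb hbβ hs0 hsE (ρ := 2 ^ (-ε)) (by positivity) hρ1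
  set c := 1 - (2 : ℝ) ^ (-ε) with hc
  have hc0 : 0 < c := by linarith
  set r1 := min ((c / 2) ^ (1 / a) / 2) (1 / (2 * (n + 1))) with hr1
  have hr10 : 0 < r1 := by positivity
  have hr1a : (2 * r1) ^ a ≤ c / 2 := by
    have h1 : 2 * r1 ≤ (c / 2) ^ (1 / a) := by
      have := min_le_left ((c / 2) ^ (1 / a) / 2) (1 / (2 * ((n : ℝ) + 1)))
      linarith
    calc (2 * r1) ^ a ≤ ((c / 2) ^ (1 / a)) ^ a := Real.rpow_le_rpow (by positivity) h1 ha.le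
      _ = c / 2 := by
        rw [← Real.rpow_mul (by positivity), one_div_mul_cancel ha.ne', Real.rpow_one]
  have hr1n : 2 * r1 * (n + 1) ≤ 1 := by
    have := min_le_right ((c / 2) ^ (1 / a) / 2) (1 / (2 * ((n : ℝ) + 1)))
    rw [le_div_iff₀ (by positivity)] at this
    linarith
  have hr11 : r1 ≤ 1 := by nlinarith [(Nat.cast_nonneg n : (0 : ℝ) ≤ n)]
  set C := 81 * (35 / r1) / ((c ^ 3 / (3 ^ b * (2 ^ a) ^ 2)) / 4) with hC
  have hev : ∀ᶠ k : ℕ in Filter.atTop, C < ((2 : ℝ) ^ k) ^ (η / 2) ∧ (3 * n : ℝ) ≤ 2 ^ k := by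
    have ht : Filter.Tendsto (fun k : ℕ => (2 : ℝ) ^ k) Filter.atTop Filter.atTop :=
      tendsto_pow_atTop_atTop_of_one_lt (by norm_num)
    exact (ht.eventually (ev_contra (by positivity))).and
      (ht.eventually (Filter.eventually_ge_atTop _))
  obtain ⟨k0, hk0⟩ := Filter.eventually_atTop.1 hev
  obtain ⟨k, hk, Q, L, f, p, A, hQ, hcfg⟩ := hred k0
  obtain ⟨hk1, hk2⟩ := hk0 k hk
  have hX1 : (1 : ℝ) ≤ 2 ^ k := one_le_pow₀ (by norm_num)
  rw [pow_conv, one_div, inv_pow] at hcfg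
  set X : ℝ := 2 ^ k with hX
  have hX0 : 0 < X := by linarith
  have hXa : X ^ (-(ε / a)) ≤ 1 :=
    Real.rpow_le_one_of_one_le_of_nonpos hX1 (by have : 0 < ε / a := by positivity
                                                 linarith)
  have hb1 := bound_one hcfg (by positivity) ha.le hb.le
    (by rw [mul_right_comm, ← div_eq_mul_inv, div_le_one hX0]; exact hk2) (by positivity)
    (r := r1 * X ^ (-(ε / a))) (by positivity)
    (by
      have h1 : 2 * (r1 * X ^ (-(ε / a))) * n ≤ 2 * (r1 * 1) * n := by gcongr
      linarith)
    (by
      rw [← mul_assoc, Real.mul_rpow (by positivity) (by positivity), ← Real.rpow_mul hX0.le]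
      have : -(ε / a) * a = -ε := by field_simp
      rw [this]
      have h2 : 0 < X ^ (-ε) := by positivity
      nlinarith)
  have hl := lhs_eq (a := a) (b := b) (c := c) (ε := ε) hX0
  have hb2 : (c ^ 3 / (3 ^ b * (2 ^ a) ^ 2)) / 4 * X ^ (b + 2 * a - 3 * ε) ≤
      (Q.card : ℝ) ^ 2 * (32 / (r1 * X ^ (-(ε / a))) + 3) := by
    refine le_trans (le_of_eq ?_) hb1
    rw [div_mul_eq_mul_div, ← hl]
    ring
  have hb3 : (Q.card : ℝ) ^ 2 * (32 / (r1 * X ^ (-(ε / a))) + 3) ≤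
      (81 * (35 / r1)) * X ^ (2 * s + ε / a) := by
    have h1 : 32 / (r1 * X ^ (-(ε / a))) + 3 ≤ 35 / r1 * X ^ (ε / a) := by
      rw [Real.rpow_neg hX0.le]
      have h2 : 32 / (r1 * (X ^ (ε / a))⁻¹) = 32 / r1 * X ^ (ε / a) := by field_simp
      have h3 : 1 ≤ X ^ (ε / a) := Real.one_le_rpow hX1 (by positivity)
      have h4 : 1 ≤ 1 / r1 := by rw [le_div_iff₀ hr10]; linarith
      have h5 : 35 / r1 * X ^ (ε / a) = 32 / r1 * X ^ (ε / a) + 3 * (1 / r1 * X ^ (ε / a)) := by ring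
      have h6 : 1 ≤ 1 / r1 * X ^ (ε / a) := one_le_mul_of_one_le_of_one_le h4 h3
      rw [h2, h5]; linarith
    calc (Q.card : ℝ) ^ 2 * (32 / (r1 * X ^ (-(ε / a))) + 3) ≤
        (9 * X ^ s) ^ 2 * (35 / r1 * X ^ (ε / a)) := by gcongr
      _ = _ := by
        rw [Real.rpow_add hX0, mul_comm 2 s, Real.rpow_mul hX0.le, Real.rpow_ofNat]; ring
  have hb4 := hb2.trans hb3
  have h7 : X ^ (b + 2 * a - 3 * ε) = X ^ (η / 2) * X ^ (2 * s + ε / a) := by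
    rw [← Real.rpow_add hX0]
    congr 1
    have : ε * (1 / a) = ε / a := by ring
    linarith
  rw [h7, ← mul_assoc] at hb4
  have hb5 := le_of_mul_le_mul_right hb4 (by positivity)
  rw [← le_div_iff₀' (by positivity)] at hb5
  exact absurd hk1 (not_lt.2 hb5)

lemma part_two {α β : ℝ} (hα : 0 < α) (hβ : 0 < β) {E : Set E2}
    (hE : ∃ L ⊆ Metric.sphere (0 : E2) 1, ENNReal.ofReal β ≤ dimH L ∧
      ∀ e ∈ L, ∃ ℓ : Set E2, IsSegment ℓ e ∧ ENNReal.ofReal α ≤ dimH (E ∩ ℓ)) :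
    ENNReal.ofReal (2 * α + β - 1) ≤ dimH E := by
  by_contra hcon
  rw [not_le] at hcon
  obtain ⟨s', hs1, hs2⟩ := ENNReal.lt_iff_exists_nnreal_btwn.1 hcon
  set s : ℝ := NNReal.toReal s' with hs
  have hsE : dimH E < ENNReal.ofReal s := by rwa [hs, ENNReal.ofReal_coe_nnreal]
  have hs0 : 0 < s := by
    have : (0 : ℝ≥0∞) < s' := lt_of_le_of_lt (zero_le) hs1
    exact_mod_cast this
  have hsαβ : s + 1 < 2 * α + β := by
    rw [← ENNReal.ofReal_coe_nnreal] at hs2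
    have := (ENNReal.ofReal_lt_ofReal_iff_of_nonneg hs0.le).1 hs2
    linarith
  obtain ⟨θ, hθ0, hθ1, hθ⟩ := theta (by linarith) hsαβ
  set a := θ * α with hadef
  set b := θ * β with hbdef
  have ha : 0 < a := by positivity
  have hb : 0 < b := by positivity
  have haα : a < α := by nlinarith
  have hbβ : b < β := by nlinarith
  have hab : 0 < b + 2 * a - 1 - s := by rw [hadef, hbdef]; linarith
  set η := b + 2 * a - 1 - s with hη
  set ε := η / 8 with hε
  have hε0 : 0 < ε := by positivity
  have hρ1 : (2 : ℝ) ^ (-ε) < 1 := Real.rpow_lt_one_of_one_lt_of_neg (by norm_num) (by linarith)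
  obtain ⟨n, hred⟩ := reduction hE ha haα hb hbβ hs0 hsE (ρ := 2 ^ (-ε)) (by positivity) hρ1
  set c := 1 - (2 : ℝ) ^ (-ε) with hc
  have hc0 : 0 < c := by linarith
  set C1 := 9 * ((18 * (20 + 4 * n)) * (2 * (1 + 4 ^ ε / ε))) with hC1
  set C := C1 / (c ^ 3 / (3 ^ b * (2 ^ a) ^ 2)) with hC
  have hev : ∀ᶠ k : ℕ in Filter.atTop, C < ((2 : ℝ) ^ k) ^ (η / 2) ∧ (3 * n : ℝ) ≤ 2 ^ k := by
    have ht : Filter.Tendsto (fun k : ℕ => (2 : ℝ) ^ k) Filter.atTop Filter.atTop :=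
      tendsto_pow_atTop_atTop_of_one_lt (by norm_num)
    exact (ht.eventually (ev_contra (by positivity))).and
      (ht.eventually (Filter.eventually_ge_atTop _))
  obtain ⟨k0, hk0⟩ := Filter.eventually_atTop.1 hev
  obtain ⟨k, hk, Q, L, f, p, A, hQ, hcfg⟩ := hred k0
  obtain ⟨hk1, hk2⟩ := hk0 k hk
  have hX1 : (1 : ℝ) ≤ 2 ^ k := one_le_pow₀ (by norm_num)
  have hKX : ((2 * 2 ^ k + 1 : ℕ) : ℝ) = 2 * (2 : ℝ) ^ k + 1 := by push_cast; ring
  rw [pow_conv, one_div, inv_pow] at hcfg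
  set X : ℝ := 2 ^ k with hX
  have hX0 : 0 < X := by linarith
  have hb1 := bound_two hcfg (by positivity) ha.le hb.le
    (by rw [mul_right_comm, ← div_eq_mul_inv, div_le_one hX0]; exact hk2) (by positivity)
    (2 * 2 ^ k + 1) (by rw [hKX, div_inv_eq_mul])
  rw [lhs_eq hX0, hKX, div_inv_eq_mul] at hb1
  have hlog : 1 + Real.log (2 * X + 1 + 1) ≤ (1 + 4 ^ ε / ε) * X ^ ε := by
    have h1 : Real.log (2 * X + 1 + 1) ≤ Real.log (4 * X) :=
      Real.log_le_log (by positivity) (by linarith)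
    have h2 := Real.log_le_rpow_div (x := 4 * X) (by positivity) hε0
    rw [Real.mul_rpow (by norm_num) hX0.le] at h2
    have h3 : 1 ≤ X ^ ε := Real.one_le_rpow hX1 hε0.le
    have h4 : (1 + 4 ^ ε / ε) * X ^ ε = X ^ ε + 4 ^ ε * X ^ ε / ε := by ring
    rw [h4]; linarith
  have hlog0 : 0 ≤ Real.log (2 * X + 1 + 1) := Real.log_nonneg (by linarith)
  have hW : 18 * ((16 + 4 * n) * X + (2 * X + 1) + 1) ≤ (18 * (20 + 4 * n)) * X := by
    nlinarith
  have hb4 : c ^ 3 / (3 ^ b * (2 ^ a) ^ 2) * X ^ (b + 2 * a - 3 * ε) ≤ C1 * X ^ (s + 1 + ε) := by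
    refine hb1.trans ?_
    calc _ ≤ (9 * X ^ s) * (((18 * (20 + 4 * n)) * X) * (2 * ((1 + 4 ^ ε / ε) * X ^ ε))) := by
          gcongr
      _ = _ := by
        rw [Real.rpow_add hX0, Real.rpow_add hX0, Real.rpow_one, hC1]; ring
  have h7 : X ^ (b + 2 * a - 3 * ε) = X ^ (η / 2) * X ^ (s + 1 + ε) := by
    rw [← Real.rpow_add hX0]
    congr 1
    linarith
  rw [h7, ← mul_assoc] at hb4
  have hb5 := le_of_mul_le_mul_right hb4 (by positivity)
  rw [← le_div_iff₀' (by positivity)] at hb5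
  exact absurd hk1 (not_lt.2 hb5)

theorem stmt0 (α β : ℝ) (hα : α ∈ Set.Ioc (0:ℝ) 1) (hβ : β ∈ Set.Ioc (0:ℝ) 1) (E : Set E2)
    (hE : ∃ L ⊆ Metric.sphere (0 : E2) 1, ENNReal.ofReal β ≤ dimH L ∧
      ∀ e ∈ L, ∃ ℓ : Set E2, IsSegment ℓ e ∧ ENNReal.ofReal α ≤ dimH (E ∩ ℓ)) :
    ENNReal.ofReal (max (α + β / 2) (2 * α + β - 1)) ≤ dimH E := by
  rcases max_choice (α + β / 2) (2 * α + β - 1) with h | h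
  · rw [h]; exact part_one hα.1 hβ.1 hE
  · rw [h]; exact part_two hα.1 hβ.1 hE
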